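/- Let F be a linearly closed differential field of characteristic zero with constants C = {c ∈ F : ∂c = 0}, and let K(u) = Σ_{n=0}^N k_n ∂^n u be a scalar differential operator over F of order N, i.e., k_N ≠ 0. Then the set of coefficient tuples (p_0,…,p_{N−1}) ∈ F^N such that the scalar differential operator P(u) = Σ_{n=0}^{N−1} p_n ∂^n u (of order at most N−1) makes K∘P selfadjoint, i.e., K(P(u)) = P*(K*(u)) for all u ∈ F, is a C-vector subspace of F^N of dimension binom(N, 2). -/

import Mathlib

/-- A derivation on a field: an additive map satisfying the Leibniz rule. -/
structure IsDerivation {F : Type*} [Field F] (d : F → F) : Prop where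
  map_add : ∀ a b : F, d (a + b) = d a + d b
  leibniz : ∀ a b : F, d (a * b) = d a * b + a * d b

/-- A differential field `(F, d)` is linearly closed if every linear differential equation
`a_M d^M u + ⋯ + a_1 d u + a_0 u = b` with `a_M ≠ 0` has a solution in `F`,
and has a nonzero solution for `b = 0`, provided that `M ≥ 1`. -/
def LinearlyClosed {F : Type*} [Field F] (d : F → F) : Prop :=
  ∀ (M : ℕ) (a : ℕ → F), a M ≠ 0 →
    (∀ b : F, ∃ u : F, ∑ n ∈ Finset.range (M + 1), a n * d^[n] u = b) ∧
    (1 ≤ M → ∃ u : F, u ≠ 0 ∧ ∑ n ∈ Finset.range (M + 1), a n * d^[n] u = 0)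

/-- The scalar differential operator `L(u) = Σ_{n=0}^M a_n d^n u`. -/
noncomputable def scalOp {F : Type*} [Field F] (d : F → F) (M : ℕ) (a : ℕ → F) (u : F) : F :=
  ∑ n ∈ Finset.range (M + 1), a n * d^[n] u

/-- The formal adjoint `L*(u) = Σ_{n=0}^M (−1)^n d^n (a_n u)`. -/
noncomputable def scalOpAdj {F : Type*} [Field F] (d : F → F) (M : ℕ) (a : ℕ → F) (u : F) : F :=
  ∑ n ∈ Finset.range (M + 1), (-1 : F) ^ n * d^[n] (a n * u)

/-!
Let `φ` be a basis of `ker K` over the constants. Since `K φⱼ = 0`, the operator `K ∘ φⱼ` is right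
divisible by `d`; taking adjoints, `φⱼ ∘ K* = d ∘ Xⱼ` with `Xⱼ` of order less than `N`. If `K ∘ P`
is selfadjoint, then `P` maps `ker K*` into `ker K`. On `ker K*` the operators `Xⱼ` take constant
values and form a basis of the dual space, so `P` agrees there with `∑ cᵢⱼ φᵢ ∘ Xⱼ` for some
constants `cᵢⱼ`. The two operators are then equal, because a nonzero operator of order less than `N`
cannot vanish on the `N`-dimensional space `ker K*`. Formally `P = G ∘ K*` with Green's operator
`G = ∑ cᵢⱼ φᵢ d⁻¹ φⱼ`. As `d` is skew, `K ∘ G ∘ K*` is selfadjoint if and only if `c` is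
skew-symmetric, so the solutions correspond to the skew-symmetric `N × N` matrices over `C`.
-/

universe v

section LinearAlgebra

variable {K : Type*} [Field K]

theorem rank_comap_of_surjective {V W : Type v} [AddCommGroup V] [AddCommGroup W] [Module K V]
    [Module K W] {f : V →ₗ[K] W} (hf : Function.Surjective f) (p : Submodule K W) :
    Module.rank K (p.comap f) = Module.rank K p + Module.rank K (LinearMap.ker f) := by
  have h := LinearMap.rank_range_add_rank_ker (f.domRestrict (p.comap f))
  rwa [LinearMap.range_domRestrict, Submodule.map_comap_eq_of_surjective hf,
    LinearMap.ker_domRestrict, ← Submodule.submoduleOf,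
    (Submodule.submoduleOfEquivOfLe (LinearMap.ker_le_comap f)).rank_eq, eq_comm] at h

theorem linearIndependent_coe_basis {V ι : Type*} [AddCommGroup V] [Module K V] {p : Submodule K V}
    (b : Module.Basis ι K p) : LinearIndependent K fun i ↦ (b i : V) :=
  b.linearIndependent.map' p.subtype p.ker_subtype

/-- A skew-symmetric matrix is determined by its entries above the diagonal. -/
def soEquivUpper (n : Type*) [Fintype n] [LinearOrder n] (h2 : (2 : K) ≠ 0) :
    LieAlgebra.Orthogonal.so n K ≃ₗ[K] ({p : n × n // p.1 < p.2} → K) where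
  toFun A p := A.1 p.1.1 p.1.2
  map_add' _ _ := rfl
  map_smul' _ _ := rfl
  invFun g := ⟨.of fun i j ↦
    if h : i < j then g ⟨(i, j), h⟩ else if h : j < i then -g ⟨(j, i), h⟩ else 0, by
      rw [LieAlgebra.Orthogonal.mem_so]
      ext i j
      rcases lt_trichotomy i j with h | rfl | h
      · simp [h, h.not_gt]
      · simp
      · simp [h, h.not_gt]⟩
  left_inv A := by
    have hA (i j) : A.1 j i = -A.1 i j :=
      congrFun₂ ((LieAlgebra.Orthogonal.mem_so _ _ _).1 A.2) i j
    have hdiag (i) : A.1 i i = 0 := by simpa [eq_neg_iff_add_eq_zero, ← two_mul, h2] using hA i i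
    ext i j
    rcases lt_trichotomy i j with h | rfl | h
    · simp [h]
    · simp [hdiag]
    · simp [h, h.not_gt, hA j i]
  right_inv g := by ext p; simp [p.2]

theorem finrank_so (n : Type*) [Fintype n] [LinearOrder n] (h2 : (2 : K) ≠ 0) :
    Module.finrank K (LieAlgebra.Orthogonal.so n K) = (Fintype.card n).choose 2 := by
  rw [(soEquivUpper n h2).finrank_eq, Module.finrank_fintype_fun_eq_card, Fintype.card_subtype,
    Fintype.card_product_filter_lt]

end LinearAlgebra

/-- A `C`-linear operator on `F` paired with a candidate for its formal adjoint. The ring of pairs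
stands in for the ring of differential operators: taking formal adjoints is the involution
exchanging the two entries, and is well defined without reference to coefficients. Composition of
adjoints reverses the order, whence the opposite ring. -/
def AdjointPair (C F : Type*) [CommRing C] [CommRing F] [Algebra C F] : Type _ :=
  Module.End C F × (Module.End C F)ᵐᵒᵖ

namespace AdjointPair

section Ring

variable {C F : Type*} [CommRing C] [CommRing F] [Algebra C F]

instance : Ring (AdjointPair C F) :=
  inferInstanceAs (Ring (Module.End C F × (Module.End C F)ᵐᵒᵖ))

instance : Algebra C (AdjointPair C F) :=
  inferInstanceAs (Algebra C (Module.End C F × (Module.End C F)ᵐᵒᵖ))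

instance : StarRing (AdjointPair C F) where
  star A := (A.2.unop, MulOpposite.op A.1)
  star_involutive _ := rfl
  star_mul _ _ := rfl
  star_add _ _ := rfl

/-- The operator underlying an adjoint pair. -/
def toEnd : AdjointPair C F →ₐ[C] Module.End C F :=
  AlgHom.fst C (Module.End C F) (Module.End C F)ᵐᵒᵖ

@[ext]
theorem ext {A B : AdjointPair C F} (h : toEnd A = toEnd B)
    (h_star : toEnd (star A) = toEnd (star B)) : A = B :=
  Prod.ext h (MulOpposite.unop_injective h_star)

theorem isSelfAdjoint_iff_toEnd_eq {A : AdjointPair C F} :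
    IsSelfAdjoint A ↔ toEnd A = toEnd (star A) :=
  ⟨fun h ↦ by rw [h.star_eq], fun h ↦ ext h.symm (by rwa [star_star])⟩

theorem star_algebra_smul (c : C) (A : AdjointPair C F) : star (c • A) = c • star A := rfl

/-- Multiplication by `f`, its own formal adjoint. -/
def mulOp : F →ₐ[C] AdjointPair C F :=
  (Algebra.lmul C F).prod ((Algebra.lmul C F).toOpposite fun x y ↦ by
    rw [commute_iff_eq, ← map_mul, ← map_mul, mul_comm])

@[simp]
theorem toEnd_mulOp_apply (f u : F) : toEnd (mulOp (C := C) f) u = f * u := rfl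

@[simp]
theorem star_mulOp (f : F) : star (mulOp (C := C) f) = mulOp f := rfl

instance : Module F (AdjointPair C F) :=
  Module.compHom _ (mulOp (C := C) (F := F)).toRingHom

theorem smul_def (f : F) (A : AdjointPair C F) : f • A = mulOp f * A := rfl

instance : IsScalarTower F (AdjointPair C F) (AdjointPair C F) where
  smul_assoc f A B := mul_assoc (mulOp f) A B

instance : IsScalarTower C F (AdjointPair C F) where
  smul_assoc c f A := by simp only [smul_def, map_smul, smul_mul_assoc]

@[simp]
theorem toEnd_smul_apply (f : F) (A : AdjointPair C F) (u : F) :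
    toEnd (f • A) u = f * toEnd A u := rfl

variable (d : Derivation C F F)

/-- The derivation as a differential operator, with formal adjoint `-d`. -/
def derivOp : AdjointPair C F :=
  (d.toLinearMap, MulOpposite.op (-d.toLinearMap))

@[simp]
theorem toEnd_derivOp : toEnd (derivOp d) = d.toLinearMap := rfl

@[simp]
theorem star_derivOp : star (derivOp d) = -derivOp d :=
  ext rfl (neg_neg d.toLinearMap).symm

theorem derivOp_mul_mulOp (f : F) :
    derivOp d * mulOp f = mulOp f * derivOp d + mulOp (d f) := by
  refine ext (LinearMap.ext fun u ↦ ?_) (LinearMap.ext fun u ↦ ?_)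
  · change d (f * u) = f * d u + d f * u
    rw [d.leibniz]; simp only [smul_eq_mul]; ring
  · change f * -d u = -d (f * u) + d f * u
    rw [d.leibniz]; simp only [smul_eq_mul]; ring

end Ring

section Order

variable {C F : Type*} [CommRing C] [CommRing F] [Algebra C F] (d : Derivation C F F)

/-- The differential operator `∑ aᵢ dⁱ` with coefficients `a₀, …, aₙ₋₁`. -/
noncomputable def ofCoeffs (n : ℕ) : (Fin n → F) →ₗ[F] AdjointPair C F :=
  Fintype.linearCombination F fun i ↦ derivOp d ^ (i : ℕ)

theorem toEnd_ofCoeffs_apply {n : ℕ} (a : Fin n → F) (u : F) :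
    toEnd (ofCoeffs d n a) u = ∑ i : Fin n, a i * d^[i] u := by
  simp [ofCoeffs, Fintype.linearCombination_apply, LinearMap.sum_apply, Module.End.pow_apply]

theorem toEnd_star_ofCoeffs_apply {n : ℕ} (a : Fin n → F) (u : F) :
    toEnd (star (ofCoeffs d n a)) u = ∑ i : Fin n, (-1) ^ (i : ℕ) * d^[i] (a i * u) := by
  have h_neg_pow (i : ℕ) (v : F) : ((-d.toLinearMap) ^ i) v = (-1) ^ i * d^[i] v := by
    rw [← Derivation.coeFn_coe, ← Module.End.pow_apply]
    rcases i.even_or_odd with h | h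
    · rw [h.neg_one_pow, one_mul]
      exact congr($(h.neg_pow (α := Module.End C F) d.toLinearMap) v)
    · rw [h.neg_one_pow, neg_one_mul]
      exact congr($(h.neg_pow (α := Module.End C F) d.toLinearMap) v)
  simp [ofCoeffs, Fintype.linearCombination_apply, LinearMap.sum_apply, smul_def, h_neg_pow]

/-- The `F`-space of differential operators of order less than `n`. -/
noncomputable def orderLT (n : ℕ) : Submodule F (AdjointPair C F) :=
  LinearMap.range (ofCoeffs d n)

variable {d} {n : ℕ} {A : AdjointPair C F}

theorem ofCoeffs_mem_orderLT (a : Fin n → F) : ofCoeffs d n a ∈ orderLT d n :=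
  LinearMap.mem_range_self _ a

@[simp]
theorem orderLT_zero : orderLT d 0 = ⊥ := by
  simp [orderLT, Subsingleton.elim (ofCoeffs d 0) 0]

theorem mem_orderLT_succ :
    A ∈ orderLT d (n + 1) ↔ ∃ B ∈ orderLT d n, ∃ f, B * derivOp d + mulOp f = A := by
  have h_cons (f : F) (b : Fin n → F) :
      ofCoeffs d (n + 1) (Fin.cons f b) = ofCoeffs d n b * derivOp d + mulOp f := by
    simp [ofCoeffs, Fintype.linearCombination_apply, Fin.sum_univ_succ, Finset.sum_mul, pow_succ,
      smul_def, mul_assoc, add_comm]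
  constructor
  · rintro ⟨a, rfl⟩
    refine ⟨_, ofCoeffs_mem_orderLT (Fin.tail a), a 0, ?_⟩
    rw [← h_cons, Fin.cons_self_tail]
  · rintro ⟨_, ⟨b, rfl⟩, f, rfl⟩
    exact ⟨_, h_cons f b⟩

theorem ofCoeffs_succ (a : Fin (n + 1) → F) :
    ofCoeffs d (n + 1) a = ofCoeffs d n (Fin.init a) + a (Fin.last n) • derivOp d ^ n := by
  simp [ofCoeffs, Fintype.linearCombination_apply, Fin.sum_univ_castSucc, Fin.init]

theorem mulOp_mem_orderLT (n : ℕ) (f : F) : mulOp f ∈ orderLT d (n + 1) :=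
  mem_orderLT_succ.2 ⟨0, zero_mem _, f, by simp⟩

theorem mul_derivOp_mem_orderLT (hA : A ∈ orderLT d n) : A * derivOp d ∈ orderLT d (n + 1) :=
  mem_orderLT_succ.2 ⟨A, hA, 0, by simp⟩

theorem orderLT_mono : Monotone (orderLT d) := by
  refine monotone_nat_of_le_succ fun n ↦ ?_
  rintro _ ⟨a, rfl⟩
  exact ⟨Fin.snoc a 0, by simp [ofCoeffs_succ]⟩

theorem mul_mulOp_mem_orderLT (hA : A ∈ orderLT d n) (f : F) : A * mulOp f ∈ orderLT d n := by
  induction n generalizing A f with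
  | zero => simp_all
  | succ n ih =>
    obtain ⟨B, hB, g, rfl⟩ := mem_orderLT_succ.1 hA
    have h_expand : (B * derivOp d + mulOp g) * mulOp f
        = B * mulOp f * derivOp d + B * mulOp (d f) + mulOp (g * f) := by
      rw [add_mul, mul_assoc, derivOp_mul_mulOp, map_mul]
      noncomm_ring
    rw [h_expand]
    exact add_mem (add_mem (mul_derivOp_mem_orderLT (ih hB f))
      (orderLT_mono n.le_succ (ih hB (d f)))) (mulOp_mem_orderLT n _)

theorem derivOp_mul_mem_orderLT (hA : A ∈ orderLT d n) : derivOp d * A ∈ orderLT d (n + 1) := by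
  induction n generalizing A with
  | zero => simp_all
  | succ n ih =>
    obtain ⟨B, hB, f, rfl⟩ := mem_orderLT_succ.1 hA
    rw [mul_add, ← mul_assoc, derivOp_mul_mulOp, ← add_assoc, ← add_mul]
    exact add_mem (mul_derivOp_mem_orderLT (add_mem (ih hB) (mulOp_mem_orderLT n f)))
      (mulOp_mem_orderLT _ _)

theorem star_mem_orderLT (hA : A ∈ orderLT d n) : star A ∈ orderLT d n := by
  induction n generalizing A with
  | zero => simp_all
  | succ n ih =>
    obtain ⟨B, hB, f, rfl⟩ := mem_orderLT_succ.1 hA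
    rw [star_add, star_mul, star_mulOp, star_derivOp, neg_mul]
    exact add_mem (neg_mem (derivOp_mul_mem_orderLT (ih hB))) (mulOp_mem_orderLT n f)

/-- Right division by `d - φ'/φ`, stated without dividing by `φ`. -/
theorem exists_mul_mulOp_eq_mul_derivOp (hA : A ∈ orderLT d (n + 1)) {φ : F}
    (hφ : toEnd A φ = 0) : ∃ B ∈ orderLT d n, A * mulOp φ = B * derivOp d := by
  obtain ⟨B, hB, f, h⟩ := mem_orderLT_succ.1 (mul_mulOp_mem_orderLT hA φ)
  have hf : f = 0 := by simpa [hφ] using congr(toEnd $h 1)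
  exact ⟨B, hB, by simpa [hf] using h.symm⟩

theorem exists_smul_star_eq_derivOp_mul (hA : A ∈ orderLT d (n + 1)) {φ : F}
    (hφ : toEnd A φ = 0) : ∃ X ∈ orderLT d n, φ • star A = derivOp d * X := by
  obtain ⟨B, hB, h⟩ := exists_mul_mulOp_eq_mul_derivOp hA hφ
  refine ⟨-star B, neg_mem (star_mem_orderLT hB), ?_⟩
  simpa [smul_def] using congr(star $h)

variable (d) in
/-- `A` is a differential operator of order exactly `n`. -/
def HasOrder (A : AdjointPair C F) (n : ℕ) : Prop :=
  A ∈ orderLT d (n + 1) ∧ A ∉ orderLT d n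

theorem HasOrder.star (hA : HasOrder d A n) : HasOrder d (star A) n :=
  ⟨star_mem_orderLT hA.1, fun h ↦ hA.2 (by simpa using star_mem_orderLT h)⟩

theorem HasOrder.ne_zero (hA : HasOrder d A n) : A ≠ 0 := by
  rintro rfl
  exact hA.2 (zero_mem _)

theorem exists_hasOrder_lt (hA : A ∈ orderLT d n) (hA0 : A ≠ 0) : ∃ m < n, HasOrder d A m := by
  induction n with
  | zero => simp_all
  | succ n ih =>
    by_cases h : A ∈ orderLT d n
    · obtain ⟨m, hm, hAm⟩ := ih h
      exact ⟨m, hm.trans n.lt_succ_self, hAm⟩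
    · exact ⟨n, n.lt_succ_self, hA, h⟩

theorem HasOrder.exists_eq_ofCoeffs (hA : HasOrder d A n) :
    ∃ a : Fin (n + 1) → F, a (Fin.last n) ≠ 0 ∧ ofCoeffs d (n + 1) a = A := by
  obtain ⟨⟨a, rfl⟩, ha⟩ := hA
  refine ⟨a, fun h ↦ ha ?_, rfl⟩
  rw [ofCoeffs_succ, h, zero_smul, add_zero]
  exact ofCoeffs_mem_orderLT _

end Order

section LinearlyClosed

variable {C F : Type*} [Field C] [Field F] [Algebra C F] {d : Derivation C F F}
  {n : ℕ} {A B : AdjointPair C F}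

section

variable (hlc : LinearlyClosed d)
include hlc

theorem toEnd_ofCoeffs_surjective {a : Fin (n + 1) → F} (ha : a (Fin.last n) ≠ 0) :
    Function.Surjective (toEnd (ofCoeffs d (n + 1) a)) := by
  intro b
  obtain ⟨u, hu⟩ := (hlc n (fun i ↦ a (Fin.ofNat (n + 1) i)) (by simpa using ha)).1 b
  refine ⟨u, ?_⟩
  rw [toEnd_ofCoeffs_apply, ← hu,
    ← Fin.sum_univ_eq_sum_range fun i ↦ a (Fin.ofNat (n + 1) i) * d^[i] u]
  simp

theorem HasOrder.toEnd_surjective (hA : HasOrder d A n) : Function.Surjective (toEnd A) := by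
  obtain ⟨a, ha, rfl⟩ := hA.exists_eq_ofCoeffs
  exact toEnd_ofCoeffs_surjective hlc ha

theorem HasOrder.exists_ne_zero_toEnd_eq_zero (hA : HasOrder d A (n + 1)) :
    ∃ u ≠ 0, toEnd A u = 0 := by
  obtain ⟨a, ha, rfl⟩ := hA.exists_eq_ofCoeffs
  obtain ⟨u, hu0, hu⟩ :=
    (hlc (n + 1) (fun i ↦ a (Fin.ofNat (n + 2) i)) (by simpa using ha)).2 (by lia)
  refine ⟨u, hu0, ?_⟩
  rw [toEnd_ofCoeffs_apply, ← hu,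
    ← Fin.sum_univ_eq_sum_range fun i ↦ a (Fin.ofNat (n + 2) i) * d^[i] u]
  simp

theorem toEnd_surjective (hA : A ∈ orderLT d n) (hA0 : A ≠ 0) :
    Function.Surjective (toEnd A) := by
  obtain ⟨m, -, hm⟩ := exists_hasOrder_lt hA hA0
  exact hm.toEnd_surjective hlc

theorem eq_zero_of_toEnd_eq_zero (hA : A ∈ orderLT d n) (h : toEnd A = 0) : A = 0 := by
  by_contra hA0
  obtain ⟨u, hu⟩ := toEnd_surjective hlc hA hA0 1
  simp [h] at hu

theorem derivation_surjective : Function.Surjective d := by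
  intro b
  obtain ⟨u, hu⟩ := (hlc 1 (Pi.single 1 1) (by simp)).1 b
  exact ⟨u, by simpa [Finset.sum_range_succ] using hu⟩

theorem ofCoeffs_injective (n : ℕ) : Function.Injective (ofCoeffs d n) := by
  rw [← LinearMap.ker_eq_bot, LinearMap.ker_eq_bot']
  induction n with
  | zero => exact fun a _ ↦ Subsingleton.elim a 0
  | succ n ih =>
    intro a ha
    have h_last : a (Fin.last n) = 0 := by
      by_contra h
      obtain ⟨u, hu⟩ := toEnd_ofCoeffs_surjective hlc h 1
      simp [ha] at hu
    have h_init : Fin.init a = 0 := ih _ (by simpa [ofCoeffs_succ, h_last] using ha)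
    exact funext fun i ↦ Fin.lastCases h_last (congrFun h_init) i

theorem hasOrder_ofCoeffs {a : Fin (n + 1) → F} (ha : a (Fin.last n) ≠ 0) :
    HasOrder d (ofCoeffs d (n + 1) a) n := by
  refine ⟨ofCoeffs_mem_orderLT a, ?_⟩
  rintro ⟨b, hb⟩
  have hab : Fin.snoc b 0 = a := ofCoeffs_injective hlc (n + 1) (by simp [ofCoeffs_succ, ← hb])
  simp [← hab] at ha

theorem eq_zero_of_mul_eq_zero {m : ℕ} (hA : A ∈ orderLT d m) (hB : B ∈ orderLT d n)
    (hA0 : A ≠ 0) (h : A * B = 0) : B = 0 := by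
  by_contra hB0
  refine hA0 (eq_zero_of_toEnd_eq_zero hlc hA (LinearMap.ext fun v ↦ ?_))
  obtain ⟨u, rfl⟩ := toEnd_surjective hlc hB hB0 v
  simpa using congr(toEnd $h u)

end

theorem HasOrder.exists_mul_mulOp_eq_mul_derivOp (hA : HasOrder d A (n + 1)) {w : F} (hw : w ≠ 0)
    (hAw : toEnd A w = 0) : ∃ B, HasOrder d B n ∧ A * mulOp w = B * derivOp d := by
  obtain ⟨B, hB, hAB⟩ := AdjointPair.exists_mul_mulOp_eq_mul_derivOp hA.1 hAw
  refine ⟨B, ⟨hB, fun h ↦ hA.2 ?_⟩, hAB⟩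
  have hA_eq : A = B * derivOp d * mulOp w⁻¹ := by
    rw [← hAB, mul_assoc, ← map_mul, mul_inv_cancel₀ hw, map_one, mul_one]
  rw [hA_eq]
  exact mul_mulOp_mem_orderLT (mul_derivOp_mem_orderLT h) _

theorem rank_ker_derivation (hC : ∀ f, d f = 0 → f ∈ (algebraMap C F).range) :
    Module.rank C (LinearMap.ker d.toLinearMap) = 1 := by
  refine rank_eq_one ⟨1, d.map_one_eq_zero⟩ (by simp [Subtype.ext_iff]) ?_
  rintro ⟨f, hf⟩
  obtain ⟨c, rfl⟩ := hC f hf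
  exact ⟨c, by simp [Subtype.ext_iff, Algebra.smul_def]⟩

variable (hlc : LinearlyClosed d) (hC : ∀ f, d f = 0 → f ∈ (algebraMap C F).range)
include hlc hC

/-- The induction is reduction of order: if `A w = 0` then `A ∘ w = B ∘ d`. -/
theorem HasOrder.rank_ker (hA : HasOrder d A n) :
    Module.rank C (LinearMap.ker (toEnd A)) = n := by
  induction n generalizing A with
  | zero =>
    obtain ⟨B, hB, f, rfl⟩ := mem_orderLT_succ.1 hA.1
    obtain rfl : B = 0 := by simpa using hB
    have hf : f ≠ 0 := by rintro rfl; simpa using hA.ne_zero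
    have h_ker : LinearMap.ker (toEnd (0 * derivOp d + mulOp (C := C) f)) = ⊥ := by
      simp [LinearMap.ker_eq_bot', hf]
    rw [h_ker, rank_bot, Nat.cast_zero]
  | succ n ih =>
    obtain ⟨w, hw, hAw⟩ := hA.exists_ne_zero_toEnd_eq_zero hlc
    obtain ⟨B, hB, hAB⟩ := hA.exists_mul_mulOp_eq_mul_derivOp hw hAw
    have h_comap : (LinearMap.ker (toEnd A)).comap (toEnd (mulOp w))
        = (LinearMap.ker (toEnd B)).comap d.toLinearMap := by
      rw [← LinearMap.ker_comp, ← LinearMap.ker_comp, ← Module.End.mul_eq_comp, ← map_mul, hAB,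
        map_mul, toEnd_derivOp, Module.End.mul_eq_comp]
    have hw_surj : Function.Surjective (toEnd (mulOp (C := C) w)) :=
      fun u ↦ ⟨w⁻¹ * u, by simp [hw]⟩
    have hw_ker : LinearMap.ker (toEnd (mulOp (C := C) w)) = ⊥ := by
      simp [LinearMap.ker_eq_bot', hw]
    calc Module.rank C (LinearMap.ker (toEnd A))
      _ = Module.rank C ((LinearMap.ker (toEnd A)).comap (toEnd (mulOp w))) := by
        rw [rank_comap_of_surjective hw_surj, hw_ker, rank_bot, add_zero]
      _ = ((n + 1 : ℕ) : Cardinal) := by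
        rw [h_comap, rank_comap_of_surjective (derivation_surjective hlc), ih hB,
          rank_ker_derivation hC, Nat.cast_succ]

theorem HasOrder.finite_ker (hA : HasOrder d A n) :
    Module.Finite C (LinearMap.ker (toEnd A)) := by
  rw [← Module.rank_lt_aleph0_iff, hA.rank_ker hlc hC]
  exact Cardinal.natCast_lt_aleph0

theorem HasOrder.finrank_ker (hA : HasOrder d A n) :
    Module.finrank C (LinearMap.ker (toEnd A)) = n :=
  Module.finrank_eq_of_rank_eq (hA.rank_ker hlc hC)

theorem HasOrder.eq_zero_of_ker_le (hB : HasOrder d B n) (hA : A ∈ orderLT d n)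
    (h : LinearMap.ker (toEnd B) ≤ LinearMap.ker (toEnd A)) : A = 0 := by
  by_contra hA0
  obtain ⟨m, hmn, hm⟩ := exists_hasOrder_lt hA hA0
  have h_rank := Submodule.rank_mono h
  rw [hm.rank_ker hlc hC, hB.rank_ker hlc hC, Nat.cast_le] at h_rank
  exact hmn.not_ge h_rank

end LinearlyClosed

section GreenOperator

variable {C F ι : Type*} [Field C] [Field F] [Algebra C F] {d : Derivation C F F} {N : ℕ}
  {K P : AdjointPair C F} {φ : ι → F} {X : ι → AdjointPair C F}

theorem exists_lagrange_functional (hC : ∀ f, d f = 0 → f ∈ (algebraMap C F).range) {f : F}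
    {Y : AdjointPair C F} (hfY : f • star K = derivOp d * Y) :
    ∃ y : Module.Dual C (LinearMap.ker (toEnd (star K))),
      ∀ w : LinearMap.ker (toEnd (star K)), toEnd Y w = algebraMap C F (y w) := by
  have h_const (w : LinearMap.ker (toEnd (star K))) : toEnd Y w ∈ (algebraMap C F).range :=
    hC _ (by simpa using congr(toEnd $hfY w).symm)
  choose y hy using h_const
  refine ⟨⟨⟨y, fun v w ↦ ?_⟩, fun c w ↦ ?_⟩, fun w ↦ (hy w).symm⟩
  · exact (algebraMap C F).injective (by simp [hy])
  · refine (algebraMap C F).injective ?_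
    simp only [RingHom.id_apply, smul_eq_mul, map_mul, hy, Submodule.coe_smul, map_smul,
      ← Algebra.smul_def]

variable (hlc : LinearlyClosed d) (hC : ∀ f, d f = 0 → f ∈ (algebraMap C F).range)
  (hK : HasOrder d K N) (hφ : LinearIndependent C φ) (hX : ∀ j, X j ∈ orderLT d N)
  (hφX : ∀ j, φ j • star K = derivOp d * X j)

include hlc hC hK hφ hX hφX in
theorem linearIndependent_lagrange_functional
    {x : ι → Module.Dual C (LinearMap.ker (toEnd (star K)))}
    (hx : ∀ (j) (w : LinearMap.ker (toEnd (star K))), toEnd (X j) w = algebraMap C F (x j w)) :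
    LinearIndependent C x := by
  rw [linearIndependent_iff'] at hφ ⊢
  intro s c hc
  have hX0 : ∑ j ∈ s, c j • X j = 0 := by
    refine hK.star.eq_zero_of_ker_le hlc hC
      (sum_mem fun j _ ↦ Submodule.smul_of_tower_mem _ _ (hX j)) fun w hw ↦ ?_
    simpa [LinearMap.sum_apply, hx _ ⟨w, hw⟩, Algebra.smul_def] using
      congr(algebraMap C F ($hc ⟨w, hw⟩))
  have hφK : (∑ j ∈ s, c j • φ j) • star K = 0 := by
    simp only [Finset.sum_smul, smul_assoc, hφX, ← mul_smul_comm, ← Finset.mul_sum, hX0, mul_zero]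
  exact hφ s c ((smul_eq_zero.1 hφK).resolve_right hK.star.ne_zero)

variable [Fintype ι]

/-- Writing `Xⱼ` formally as `d⁻¹ ∘ φⱼ ∘ K*`, this is the differential operator
`(∑ cᵢⱼ φᵢ d⁻¹ φⱼ) ∘ K*`, whose first factor is the Green's operator with kernel
`∑ cᵢⱼ φᵢ(s) φⱼ(t)`. -/
def greenOp (φ : ι → F) (X : ι → AdjointPair C F) : Matrix ι ι C →ₗ[C] AdjointPair C F where
  toFun c := ∑ i, ∑ j, c i j • φ i • X j
  map_add' c c' := by simp [add_smul, Finset.sum_add_distrib]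
  map_smul' c c' := by simp [mul_smul, Finset.smul_sum]

theorem greenOp_mem_orderLT (hX : ∀ j, X j ∈ orderLT d N) (c : Matrix ι ι C) :
    greenOp φ X c ∈ orderLT d N :=
  sum_mem fun _ _ ↦ sum_mem fun j _ ↦
    Submodule.smul_of_tower_mem _ _ (Submodule.smul_mem _ _ (hX j))

theorem toEnd_greenOp_apply (c : Matrix ι ι C) {w : F} {x : ι → C}
    (hx : ∀ j, toEnd (X j) w = algebraMap C F (x j)) :
    toEnd (greenOp φ X c) w = ∑ i, c.mulVec x i • φ i := by
  simp [greenOp, LinearMap.sum_apply, hx, Matrix.mulVec, dotProduct, Finset.sum_mul,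
    Algebra.smul_def, mul_comm (φ _), mul_assoc]

/-- Since `K φᵢ = -Xᵢ* d`, the operator `K ∘ greenOp c` is the form `-∑ cᵢⱼ Xᵢ* d Xⱼ` and `d` is
skew. -/
theorem star_mul_greenOp (hφX : ∀ j, φ j • star K = derivOp d * X j) (c : Matrix ι ι C) :
    star (K * greenOp φ X c) = -(K * greenOp φ X c.transpose) := by
  have hK (i j) : K * (φ i • X j) = -(star (X i) * derivOp d * X j) := by
    have h : K * mulOp (φ i) = -(star (X i) * derivOp d) := by
      simpa [smul_def] using congr(star $(hφX i))
    rw [smul_def, ← mul_assoc, h, neg_mul]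
  have h_star (i j) : star (K * (φ i • X j)) = -(K * (φ j • X i)) := by
    simp [hK, mul_assoc]
  simp only [greenOp, LinearMap.coe_mk, AddHom.coe_mk, Finset.mul_sum, mul_smul_comm, star_sum,
    star_algebra_smul, h_star, smul_neg, Finset.sum_neg_distrib, Matrix.transpose_apply]
  rw [Finset.sum_comm]

include hlc hC hK hφ hX hφX in
theorem greenOp_injective : Function.Injective (greenOp φ X) := by
  rw [← LinearMap.ker_eq_bot, LinearMap.ker_eq_bot']
  intro c hc
  choose x hx using fun j ↦ exists_lagrange_functional hC (hφX j)
  have hx_indep := linearIndependent_lagrange_functional hlc hC hK hφ hX hφX hx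
  rw [Fintype.linearIndependent_iff] at hφ hx_indep
  ext i j
  refine hx_indep (c i) (LinearMap.ext fun w ↦ ?_) j
  have h := toEnd_greenOp_apply (φ := φ) c fun j ↦ hx j w
  simpa only [LinearMap.sum_apply, LinearMap.smul_apply, smul_eq_mul] using!
    hφ _ (by rw [← h, hc]; simp) i

include hlc hC hK hφ hX hφX in
theorem isSelfAdjoint_mul_greenOp_iff [DecidableEq ι] (c : Matrix ι ι C) :
    IsSelfAdjoint (K * greenOp φ X c) ↔ c ∈ LieAlgebra.Orthogonal.so ι C := by
  have h_cancel (c : Matrix ι ι C) : K * greenOp φ X c = 0 ↔ c = 0 := by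
    refine ⟨fun h ↦ greenOp_injective hlc hC hK hφ hX hφX ?_, fun h ↦ by simp [h]⟩
    rw [eq_zero_of_mul_eq_zero hlc hK.1 (greenOp_mem_orderLT hX c) hK.ne_zero h, map_zero]
  calc IsSelfAdjoint (K * greenOp φ X c)
    _ ↔ -(K * greenOp φ X c.transpose) = K * greenOp φ X c := by
      rw [← star_mul_greenOp hφX, IsSelfAdjoint]
    _ ↔ c.transpose = -c := by
      rw [neg_eq_iff_add_eq_zero, ← mul_add, ← map_add, h_cancel, add_eq_zero_iff_eq_neg]
    _ ↔ c ∈ LieAlgebra.Orthogonal.so ι C := (LieAlgebra.Orthogonal.mem_so _ _ _).symm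

theorem toEnd_mem_ker_of_isSelfAdjoint_mul (h : IsSelfAdjoint (K * P)) {w : F}
    (hw : w ∈ LinearMap.ker (toEnd (star K))) : toEnd P w ∈ LinearMap.ker (toEnd K) := by
  have hKP : K * P = star P * star K := by rw [← star_mul, h.star_eq]
  rw [LinearMap.mem_ker] at hw ⊢
  simpa [hw] using congr(toEnd $hKP w)

section KernelBasis

variable {b : Module.Basis ι C (LinearMap.ker (toEnd K))}
  (hbX : ∀ j, (b j : F) • star K = derivOp d * X j)
include hlc hC hK hX hbX

theorem exists_greenOp_eq (hP : P ∈ orderLT d N)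
    (hP_ker : ∀ w ∈ LinearMap.ker (toEnd (star K)), toEnd P w ∈ LinearMap.ker (toEnd K)) :
    ∃ c, greenOp (fun i ↦ (b i : F)) X c = P := by
  choose x hx using fun j ↦ exists_lagrange_functional hC (hbX j)
  have hx_span : Submodule.span C (Set.range x) = ⊤ := by
    have := hK.star.finite_ker hlc hC
    refine (linearIndependent_lagrange_functional hlc hC hK (linearIndependent_coe_basis b) hX hbX
      hx).span_eq_top_of_card_eq_finrank' ?_
    rw [Subspace.dual_finrank_eq, hK.star.finrank_ker hlc hC, ← hK.finrank_ker hlc hC,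
      Module.finrank_eq_card_basis b]
  have h_coord (i) : ∃ c : ι → C, ∑ j, c j • x j = b.coord i ∘ₗ (toEnd P).restrict hP_ker :=
    (Submodule.mem_span_range_iff_exists_fun C).1 (hx_span ▸ Submodule.mem_top)
  choose c hc using h_coord
  refine ⟨.of c, sub_eq_zero.1 (hK.star.eq_zero_of_ker_le hlc hC
    (sub_mem (greenOp_mem_orderLT hX _) hP) fun w hw ↦ ?_)⟩
  let Pw : LinearMap.ker (toEnd K) := ⟨toEnd P w, hP_ker w hw⟩
  have hc_apply (i) : (Matrix.of c).mulVec (fun j ↦ x j ⟨w, hw⟩) i = b.repr Pw i := by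
    simpa only [LinearMap.sum_apply] using! congr($(hc i) ⟨w, hw⟩)
  rw [LinearMap.mem_ker, map_sub, LinearMap.sub_apply, sub_eq_zero]
  calc toEnd (greenOp (fun i ↦ (b i : F)) X (.of c)) w
    _ = ∑ i, b.repr Pw i • (b i : F) := by
      simp only [toEnd_greenOp_apply _ fun j ↦ hx j ⟨w, hw⟩, hc_apply]
    _ = toEnd P w := by
      simpa only [AddSubmonoidClass.coe_finsetSum, Submodule.coe_smul] using
        congrArg Subtype.val (b.sum_repr Pw)

theorem isSelfAdjoint_mul_iff_exists_greenOp [DecidableEq ι] (hP : P ∈ orderLT d N) :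
    IsSelfAdjoint (K * P) ↔
      ∃ c ∈ LieAlgebra.Orthogonal.so ι C, greenOp (fun i ↦ (b i : F)) X c = P := by
  have h_iff := isSelfAdjoint_mul_greenOp_iff hlc hC hK (linearIndependent_coe_basis b) hX hbX
  constructor
  · intro h
    obtain ⟨c, rfl⟩ := exists_greenOp_eq hlc hC hK hX hbX hP fun w ↦
      toEnd_mem_ker_of_isSelfAdjoint_mul h
    exact ⟨c, (h_iff c).1 h, rfl⟩
  · rintro ⟨c, hc, rfl⟩
    exact (h_iff c).2 hc

end KernelBasis

attribute [local instance] LieRing.ofAssociativeRing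

include hlc hC hK in
theorem nonempty_linearEquiv_so (S : Submodule C (Fin N → F))
    (hS : ∀ p, p ∈ S ↔ IsSelfAdjoint (K * ofCoeffs d N p)) :
    Nonempty (S ≃ₗ[C] LieAlgebra.Orthogonal.so (Fin N) C) := by
  have := hK.finite_ker hlc hC
  let b := Module.finBasisOfFinrankEq C _ (hK.finrank_ker hlc hC)
  choose X hX hbX using fun j ↦ exists_smul_star_eq_derivOp_mul hK.1 (b j).2
  let T : (Fin N → F) →ₗ[C] AdjointPair C F := (ofCoeffs d N).restrictScalars C
  let G : Matrix (Fin N) (Fin N) C →ₗ[C] AdjointPair C F := greenOp (fun i ↦ (b i : F)) X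
  have hT : Function.Injective T := ofCoeffs_injective hlc N
  have hG : Function.Injective G :=
    greenOp_injective hlc hC hK (linearIndependent_coe_basis b) hX hbX
  have h_iff {P} (hP : P ∈ orderLT d N) :=
    isSelfAdjoint_mul_iff_exists_greenOp hlc hC hK hX hbX hP
  have h_map : S.map T = (LieAlgebra.Orthogonal.so (Fin N) C).toSubmodule.map G := by
    ext P
    constructor
    · rintro ⟨p, hp, rfl⟩
      exact (h_iff (ofCoeffs_mem_orderLT p)).1 ((hS p).1 hp)
    · rintro ⟨c, hc, rfl⟩
      obtain ⟨p, hp⟩ := greenOp_mem_orderLT hX c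
      exact ⟨p, (hS p).2 ((h_iff (ofCoeffs_mem_orderLT p)).2 ⟨c, hc, hp.symm⟩), hp⟩
  exact ⟨(S.equivMapOfInjective T hT).trans
    ((LinearEquiv.ofEq _ _ h_map).trans (Submodule.equivMapOfInjective G hG _).symm)⟩

end GreenOperator

section Coefficients

variable {C F : Type*} [CommRing C] [Field F] [Algebra C F] (d : Derivation C F F)

theorem toEnd_ofCoeffs_eq_scalOp (N : ℕ) (k : ℕ → F) (u : F) :
    toEnd (ofCoeffs d (N + 1) fun i ↦ k i) u = scalOp d N k u := by
  rw [toEnd_ofCoeffs_apply, scalOp, Fin.sum_univ_eq_sum_range fun i ↦ k i * d^[i] u]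

theorem toEnd_star_ofCoeffs_eq_scalOpAdj (N : ℕ) (k : ℕ → F) (u : F) :
    toEnd (star (ofCoeffs d (N + 1) fun i ↦ k i)) u = scalOpAdj d N k u := by
  rw [toEnd_star_ofCoeffs_apply, scalOpAdj,
    Fin.sum_univ_eq_sum_range fun i ↦ (-1) ^ i * d^[i] (k i * u)]

theorem isSelfAdjoint_ofCoeffs_mul_iff (N : ℕ) (k : ℕ → F) {M : ℕ} (p : Fin M → F) :
    IsSelfAdjoint ((ofCoeffs d (N + 1) fun i ↦ k i) * ofCoeffs d M p) ↔ ∀ u : F,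
      scalOp d N k (∑ q : Fin M, p q * d^[(q : ℕ)] u)
        = ∑ q : Fin M, (-1 : F) ^ (q : ℕ) * d^[(q : ℕ)] (p q * scalOpAdj d N k u) := by
  simp only [isSelfAdjoint_iff_toEnd_eq, LinearMap.ext_iff, star_mul, map_mul,
    Module.End.mul_apply, toEnd_ofCoeffs_eq_scalOp, toEnd_star_ofCoeffs_eq_scalOpAdj]
  simp only [toEnd_ofCoeffs_apply, toEnd_star_ofCoeffs_apply]

end Coefficients

end AdjointPair

/-- The derivation `d` as a bundled derivation, linear over a subfield `C` of its constants. -/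
def IsDerivation.toDerivation {F : Type*} [Field F] {d : F → F} (hd : IsDerivation d)
    (C : Subfield F) (hC : ∀ x ∈ C, d x = 0) : Derivation C F F :=
  Derivation.mk'
    { toFun := d
      map_add' := hd.map_add
      map_smul' := fun c x ↦ by
        simp [Subfield.smul_def, hd.leibniz, hC c c.2] }
    fun x y ↦ by
      simp only [LinearMap.coe_mk, AddHom.coe_mk, hd.leibniz, smul_eq_mul]
      ring

theorem stmt_7_general (F : Type*) [Field F] (h2 : (2 : F) ≠ 0) (d : F → F) (hd : IsDerivation d)
    (hlc : LinearlyClosed d)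
    (C : Subfield F) (hC : ∀ x : F, x ∈ C ↔ d x = 0)
    (N : ℕ) (k : ℕ → F) (hkN : k N ≠ 0)
    (S : Submodule C (Fin N → F))
    (hS : ∀ p : Fin N → F, p ∈ S ↔ ∀ u : F,
      scalOp d N k (∑ q : Fin N, p q * d^[(q : ℕ)] u)
        = ∑ q : Fin N, (-1 : F) ^ (q : ℕ) * d^[(q : ℕ)] (p q * scalOpAdj d N k u)) :
    Module.rank C S = (N.choose 2 : Cardinal) := by
  let D : Derivation C F F := hd.toDerivation C fun x ↦ (hC x).1
  have h2C : (2 : C) ≠ 0 := fun h ↦ h2 congr(($h : F))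
  have hCD (f : F) (hf : D f = 0) : f ∈ (algebraMap C F).range := ⟨⟨f, (hC f).2 hf⟩, rfl⟩
  have hK : AdjointPair.HasOrder D (AdjointPair.ofCoeffs D (N + 1) fun i ↦ k i) N :=
    AdjointPair.hasOrder_ofCoeffs hlc hkN
  obtain ⟨e⟩ := AdjointPair.nonempty_linearEquiv_so hlc hCD hK S fun p ↦
    (hS p).trans (AdjointPair.isSelfAdjoint_ofCoeffs_mul_iff D N k p).symm
  rw [e.rank_eq, ← Module.finrank_eq_rank, finrank_so _ h2C, Fintype.card_fin]

/-- Let `F` be a linearly closed differential field of characteristic zero with constants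
`C`, and let `K(u) = Σ_{n=0}^N k_n d^n u` be a scalar differential operator of order `N`
(`k_N ≠ 0`).  The coefficient tuples `(p_0,…,p_{N−1}) ∈ F^N` for which the operator
`P(u) = Σ_{n<N} p_n d^n u` makes `K∘P` selfadjoint (i.e. `K(P(u)) = P*(K*(u))` for all
`u`) form a `C`-subspace of `F^N` of dimension `N choose 2`. -/
theorem stmt_7 (F : Type*) [Field F] [CharZero F] (d : F → F) (hd : IsDerivation d)
    (hlc : LinearlyClosed d)
    (C : Subfield F) (hC : ∀ x : F, x ∈ C ↔ d x = 0)
    (N : ℕ) (k : ℕ → F) (hkN : k N ≠ 0)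
    (S : Submodule C (Fin N → F))
    (hS : ∀ p : Fin N → F, p ∈ S ↔ ∀ u : F,
      scalOp d N k (∑ q : Fin N, p q * d^[(q : ℕ)] u)
        = ∑ q : Fin N, (-1 : F) ^ (q : ℕ) * d^[(q : ℕ)] (p q * scalOpAdj d N k u)) :
    Module.rank C S = (N.choose 2 : Cardinal) :=
  stmt_7_general F two_ne_zero d hd hlc C hC N k hkN S hS
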